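/- arXiv:1111.4445 — 4 statements merged into one kernel-verified Lean document; each statement's English description precedes it below -/
import Mathlib

section
/- Define the differential–difference operators φ₁, φ₂ : C¹([0,1],ℝⁿ) → C⁰([0,1],ℝⁿ) × ℝⁿ by φ₁(ζ) = (ζ̇ − T·A(t)·ζ, ζ(0) + ζ(1)) and φ₂(ζ) = (ζ̇ + T·A(t)ᵀ·ζ, ζ(0) + ζ(1)). Then for every ζ ∈ C¹([0,1],ℝⁿ): (i) ζ lies in the kernel of φ₁ if and only if the pair (ζ, ζ(0)) is orthogonal to φ₂(g) for every g ∈ C¹([0,1],ℝⁿ); and (ii) ζ lies in the kernel of φ₂ if and only if the pair (ζ, ζ(0)) is orthogonal to φ₁(g) for every g ∈ C¹([0,1],ℝⁿ). -/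
open Matrix Set

open MeasureTheory in
lemma aux_parts (n : ℕ) (B : ℝ → Matrix (Fin n) (Fin n) ℝ) (hB : ContinuousOn B (Icc 0 1))
    (ζ : ℝ → Fin n → ℝ) (hζ : ContDiffOn ℝ 1 ζ (Icc 0 1))
    (g : ℝ → Fin n → ℝ) (hg : ContDiffOn ℝ 1 g (Icc 0 1)) :
    (∫ t in (0:ℝ)..1, ζ t ⬝ᵥ (derivWithin g (Icc 0 1) t + (B t)ᵀ *ᵥ g t)) +
          ζ 0 ⬝ᵥ (g 0 + g 1) =
    - (∫ t in (0:ℝ)..1, (derivWithin ζ (Icc 0 1) t - B t *ᵥ ζ t) ⬝ᵥ g t)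
      + (ζ 0 + ζ 1) ⬝ᵥ g 1 := by
  have hu : UniqueDiffOn ℝ (Icc (0:ℝ) 1) := uniqueDiffOn_Icc zero_lt_one
  have c1 := hζ.continuousOn
  have c2 := hg.continuousOn
  have c3 := hζ.continuousOn_derivWithin hu le_rfl
  have c4 := hg.continuousOn_derivWithin hu le_rfl
  have hdot : ∀ {u v : ℝ → Fin n → ℝ}, ContinuousOn u (Icc 0 1) → ContinuousOn v (Icc 0 1) →
      ContinuousOn (fun t => u t ⬝ᵥ v t) (Icc 0 1) := fun {u v} hu hv =>
    (show Continuous (fun p : (Fin n → ℝ) × (Fin n → ℝ) => p.1 ⬝ᵥ p.2) by fun_prop).comp_continuousOn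
      (hu.prodMk hv)
  have hmul : ∀ {M : ℝ → Matrix (Fin n) (Fin n) ℝ} {v : ℝ → Fin n → ℝ},
      ContinuousOn M (Icc 0 1) → ContinuousOn v (Icc 0 1) →
      ContinuousOn (fun t => M t *ᵥ v t) (Icc 0 1) := fun {M v} hu hv =>
    (show Continuous (fun p : Matrix (Fin n) (Fin n) ℝ × (Fin n → ℝ) => p.1 *ᵥ p.2) by
      fun_prop).comp_continuousOn (hu.prodMk hv)
  have hBt : ContinuousOn (fun t => (B t)ᵀ) (Icc 0 1) :=
    (show Continuous (fun M : Matrix (Fin n) (Fin n) ℝ => Mᵀ) by fun_prop).comp_continuousOn hB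
  have k1 : ContinuousOn (fun t => ζ t ⬝ᵥ (derivWithin g (Icc 0 1) t + (B t)ᵀ *ᵥ g t)) (Icc 0 1) :=
    hdot c1 (c4.add (hmul hBt c2))
  have k2 : ContinuousOn (fun t => (derivWithin ζ (Icc 0 1) t - B t *ᵥ ζ t) ⬝ᵥ g t) (Icc 0 1) :=
    hdot (c3.sub (hmul hB c1)) c2
  have ftc : (∫ t in (0:ℝ)..1, (ζ t ⬝ᵥ (derivWithin g (Icc 0 1) t + (B t)ᵀ *ᵥ g t) +
      (derivWithin ζ (Icc 0 1) t - B t *ᵥ ζ t) ⬝ᵥ g t)) = ζ 1 ⬝ᵥ g 1 - ζ 0 ⬝ᵥ g 0 := by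
    apply intervalIntegral.integral_eq_sub_of_hasDerivAt_of_le (f := fun t => ζ t ⬝ᵥ g t)
      zero_le_one (hdot c1 c2)
    · intro t ht
      have hn : Icc (0:ℝ) 1 ∈ nhds t := Icc_mem_nhds ht.1 ht.2
      have d1 : HasDerivAt ζ (derivWithin ζ (Icc 0 1) t) t :=
        ((hζ.differentiableOn one_ne_zero) t (Ioo_subset_Icc_self ht)).hasDerivWithinAt.hasDerivAt hn
      have d2 : HasDerivAt g (derivWithin g (Icc 0 1) t) t :=
        ((hg.differentiableOn one_ne_zero) t (Ioo_subset_Icc_self ht)).hasDerivWithinAt.hasDerivAt hn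
      have d3 : HasDerivAt (fun t => ∑ i, ζ t i * g t i)
          (∑ i, (derivWithin ζ (Icc 0 1) t i * g t i + ζ t i * derivWithin g (Icc 0 1) t i)) t :=
        HasDerivAt.fun_sum fun i _ => ((hasDerivAt_pi.1 d1) i).mul ((hasDerivAt_pi.1 d2) i)
      have e : ζ t ⬝ᵥ ((B t)ᵀ *ᵥ g t) = (B t *ᵥ ζ t) ⬝ᵥ g t := by
        rw [dotProduct_mulVec, vecMul_transpose]
      refine HasDerivAt.congr_deriv (f := fun t => ζ t ⬝ᵥ g t) d3 ?_
      rw [dotProduct_add, sub_dotProduct, e, Finset.sum_add_distrib]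
      simp only [dotProduct]
      ring
    · exact (ContinuousOn.intervalIntegrable (by rw [uIcc_of_le zero_le_one]; exact k1.add k2))
  rw [intervalIntegral.integral_add
    (ContinuousOn.intervalIntegrable (by rw [uIcc_of_le zero_le_one]; exact k1))
    (ContinuousOn.intervalIntegrable (by rw [uIcc_of_le zero_le_one]; exact k2))] at ftc
  rw [dotProduct_add, add_dotProduct]
  linarith

open MeasureTheory in
lemma aux_main (n : ℕ) (B : ℝ → Matrix (Fin n) (Fin n) ℝ) (hB : ContinuousOn B (Icc 0 1))
    (ζ : ℝ → Fin n → ℝ) (hζ : ContDiffOn ℝ 1 ζ (Icc 0 1)) :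
    ((∀ t ∈ Icc (0:ℝ) 1, derivWithin ζ (Icc 0 1) t - B t *ᵥ ζ t = 0) ∧ ζ 0 + ζ 1 = 0) ↔
      ∀ g : ℝ → Fin n → ℝ, ContDiffOn ℝ 1 g (Icc 0 1) →
        (∫ t in (0:ℝ)..1, ζ t ⬝ᵥ (derivWithin g (Icc 0 1) t + (B t)ᵀ *ᵥ g t)) +
          ζ 0 ⬝ᵥ (g 0 + g 1) = 0 := by
  have hu : UniqueDiffOn ℝ (Icc (0:ℝ) 1) := uniqueDiffOn_Icc zero_lt_one
  have c1 := hζ.continuousOn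
  have c3 := hζ.continuousOn_derivWithin hu le_rfl
  have hmul : ContinuousOn (fun t => B t *ᵥ ζ t) (Icc 0 1) :=
    (show Continuous (fun p : Matrix (Fin n) (Fin n) ℝ × (Fin n → ℝ) => p.1 *ᵥ p.2) by
      fun_prop).comp_continuousOn (hB.prodMk c1)
  have hr : ContinuousOn (fun t => derivWithin ζ (Icc 0 1) t - B t *ᵥ ζ t) (Icc 0 1) :=
    c3.sub hmul
  constructor
  · rintro ⟨h1, h2⟩ g hg
    rw [aux_parts n B hB ζ hζ g hg, h2, intervalIntegral.integral_congr (g := fun _ => (0:ℝ))]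
    · simp
    · intro t ht
      rw [uIcc_of_le zero_le_one] at ht
      simp only [h1 t ht, zero_dotProduct]
  · intro h
    have h' : ∀ g : ℝ → Fin n → ℝ, ContDiffOn ℝ 1 g (Icc 0 1) →
        - (∫ t in (0:ℝ)..1, (derivWithin ζ (Icc 0 1) t - B t *ᵥ ζ t) ⬝ᵥ g t)
          + (ζ 0 + ζ 1) ⬝ᵥ g 1 = 0 := fun g hg => by
      rw [← aux_parts n B hB ζ hζ g hg]; exact h g hg
    have hz : ∀ t ∈ Icc (0:ℝ) 1, derivWithin ζ (Icc 0 1) t - B t *ᵥ ζ t = 0 := by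
      suffices H : ∀ i, EqOn (fun t => (derivWithin ζ (Icc 0 1) t - B t *ᵥ ζ t) i)
          (fun _ => (0:ℝ)) (Icc 0 1) by
        intro t ht
        funext i
        exact H i ht
      intro i
      have hri : ContinuousOn (fun t => (derivWithin ζ (Icc 0 1) t - B t *ᵥ ζ t) i) (Icc 0 1) :=
        (continuous_apply i).comp_continuousOn hr
      have hae := IsOpen.ae_eq_zero_of_integral_contDiff_smul_eq_zero (μ := volume)
        (f := fun t => (derivWithin ζ (Icc 0 1) t - B t *ᵥ ζ t) i) (U := Ioo (0:ℝ) 1) isOpen_Ioo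
        ((hri.mono Ioo_subset_Icc_self).locallyIntegrableOn measurableSet_Ioo) (by
          intro φ hφ hc hs
          have hφ0 : ∀ t, t ∉ Ioo (0:ℝ) 1 → φ t = 0 := fun t ht =>
            image_eq_zero_of_notMem_tsupport fun hh => ht (hs hh)
          have := h' (fun t => Pi.single i (φ t)) (by
            apply ContDiff.contDiffOn
            rw [contDiff_pi]
            intro j
            by_cases hj : j = i
            · subst hj
              simpa using hφ.of_le (by exact_mod_cast le_top)
            · simp only [Pi.single_eq_of_ne hj]
              exact contDiff_const)
          simp only [hφ0 1 (by simp), dotProduct_single, mul_zero, add_zero, neg_eq_zero] at this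
          rw [intervalIntegral.integral_of_le zero_le_one] at this
          rw [← setIntegral_eq_integral_of_forall_compl_eq_zero (s := Ioc (0:ℝ) 1)]
          · refine Eq.trans ?_ this
            simp only [smul_eq_mul, mul_comm]
          · intro t ht
            rw [hφ0 t (fun hh => ht (Ioo_subset_Ioc_self hh)), zero_smul])
      refine Measure.eqOn_Icc_of_ae_eq volume zero_ne_one ?_ hri continuousOn_const
      rw [← Measure.restrict_congr_set (Ioo_ae_eq_Icc (a := (0:ℝ)) (b := 1))]
      rw [Filter.EventuallyEq, ae_restrict_iff' measurableSet_Ioo]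
      exact hae
    refine ⟨hz, ?_⟩
    have h2 := h' (fun _ => ζ 0 + ζ 1) contDiffOn_const
    rw [intervalIntegral.integral_congr (g := fun _ => (0:ℝ))] at h2
    · rw [intervalIntegral.integral_zero, neg_zero, zero_add] at h2
      exact dotProduct_self_eq_zero.1 h2
    · intro t ht
      rw [uIcc_of_le zero_le_one] at ht
      simp only [hz t ht, zero_dotProduct]

/-- Proposition 2 of the paper: the real differential–difference operators
`φ₁(ζ) = (ζ̇ − T·A(t)·ζ, ζ(0) + ζ(1))` and `φ₂(ζ) = (ζ̇ + T·A(t)ᵀ·ζ, ζ(0) + ζ(1))`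
on `C¹([0,1],ℝⁿ)` satisfy: `ζ ∈ Ker φ₁` iff `(ζ, ζ(0))` is orthogonal to the range
of `φ₂`, and `ζ ∈ Ker φ₂` iff `(ζ, ζ(0))` is orthogonal to the range of `φ₁`. -/
theorem kernel_orthogonality_antiperiodic (n : ℕ) (T : ℝ) (hT : 0 < T)
    (A : ℝ → Matrix (Fin n) (Fin n) ℝ) (hA : ContinuousOn A (Icc 0 1))
    (ζ : ℝ → Fin n → ℝ) (hζ : ContDiffOn ℝ 1 ζ (Icc 0 1)) :
    ((((∀ t ∈ Icc (0:ℝ) 1, derivWithin ζ (Icc 0 1) t - T • (A t *ᵥ ζ t) = 0) ∧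
        ζ 0 + ζ 1 = 0) ↔
      ∀ g : ℝ → Fin n → ℝ, ContDiffOn ℝ 1 g (Icc 0 1) →
        (∫ t in (0:ℝ)..1,
            ζ t ⬝ᵥ (derivWithin g (Icc 0 1) t + T • ((A t)ᵀ *ᵥ g t))) +
          ζ 0 ⬝ᵥ (g 0 + g 1) = 0) ∧
     (((∀ t ∈ Icc (0:ℝ) 1, derivWithin ζ (Icc 0 1) t + T • ((A t)ᵀ *ᵥ ζ t) = 0) ∧
        ζ 0 + ζ 1 = 0) ↔
      ∀ g : ℝ → Fin n → ℝ, ContDiffOn ℝ 1 g (Icc 0 1) →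
        (∫ t in (0:ℝ)..1,
            ζ t ⬝ᵥ (derivWithin g (Icc 0 1) t - T • (A t *ᵥ g t))) +
          ζ 0 ⬝ᵥ (g 0 + g 1) = 0)) := by
  have hA' : ContinuousOn (fun t => (A t)ᵀ) (Icc 0 1) :=
    (show Continuous (fun M : Matrix (Fin n) (Fin n) ℝ => Mᵀ) by fun_prop).comp_continuousOn hA
  have m1 := aux_main n (fun t => T • A t) (hA.const_smul T) ζ hζ
  have m2 := aux_main n (fun t => -(T • (A t)ᵀ)) (hA'.const_smul T).neg ζ hζ
  simp only [transpose_smul, smul_mulVec] at m1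
  simp only [transpose_neg, transpose_smul, transpose_transpose, neg_mulVec, smul_mulVec,
    sub_neg_eq_add, ← sub_eq_add_neg] at m2
  exact ⟨m1, m2⟩
end

section
/- Let θ ∈ ℝ. Define the differential–difference operators φ₁, φ₂ : C¹([0,1],ℂⁿ) → C⁰([0,1],ℂⁿ) × ℂⁿ by φ₁(ζ) = (ζ̇ − T·A(t)·ζ + iθ·ζ, ζ(0) − ζ(1)) and φ₂(ζ) = (ζ̇ + T·A(t)ᵀ·ζ + iθ·ζ, ζ(0) − ζ(1)). Then for every ζ ∈ C¹([0,1],ℂⁿ): (i) ζ lies in the kernel of φ₁ if and only if the pair (ζ, ζ(0)) is orthogonal to φ₂(g) for every g ∈ C¹([0,1],ℂⁿ); and (ii) ζ lies in the kernel of φ₂ if and only if the pair (ζ, ζ(0)) is orthogonal to φ₁(g) for every g ∈ C¹([0,1],ℂⁿ). -/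
open Matrix Set Complex

lemma kop_cont {n : ℕ} {u v : ℝ → Fin n → ℂ} {s : Set ℝ} (hu : ContinuousOn u s)
    (hv : ContinuousOn v s) : ContinuousOn (fun t => star (u t) ⬝ᵥ v t) s := by
  unfold dotProduct
  refine continuousOn_finsetSum _ fun i _ => ?_
  exact ((continuousOn_pi.1 hu i).star).mul (continuousOn_pi.1 hv i)

lemma kop_identity {n : ℕ} (B : ℝ → Matrix (Fin n) (Fin n) ℂ) (hB : ContinuousOn B (Icc 0 1))
    (ζ : ℝ → Fin n → ℂ) (hζ : ContDiffOn ℝ 1 ζ (Icc 0 1))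
    (g : ℝ → Fin n → ℂ) (hg : ContDiffOn ℝ 1 g (Icc 0 1)) :
    (∫ t in (0:ℝ)..1, star (ζ t) ⬝ᵥ (derivWithin g (Icc 0 1) t - (B t)ᴴ *ᵥ g t)) +
          star (ζ 0) ⬝ᵥ (g 0 - g 1) =
    star (ζ 1 - ζ 0) ⬝ᵥ g 1 -
      ∫ t in (0:ℝ)..1, star (derivWithin ζ (Icc 0 1) t + B t *ᵥ ζ t) ⬝ᵥ g t := by
  have hu : UniqueDiffOn ℝ (Icc (0:ℝ) 1) := uniqueDiffOn_Icc zero_lt_one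
  have cζ := hζ.continuousOn
  have cg := hg.continuousOn
  have cζ' : ContinuousOn (derivWithin ζ (Icc 0 1)) (Icc 0 1) :=
    hζ.continuousOn_derivWithin hu le_rfl
  have cg' : ContinuousOn (derivWithin g (Icc 0 1)) (Icc 0 1) :=
    hg.continuousOn_derivWithin hu le_rfl
  have cB1 : ContinuousOn (fun t => B t *ᵥ ζ t) (Icc 0 1) := by
    rw [continuousOn_iff_continuous_domRestrict] at *
    exact hB.matrix_mulVec cζ
  have cB2 : ContinuousOn (fun t => (B t)ᴴ *ᵥ g t) (Icc 0 1) := by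
    rw [continuousOn_iff_continuous_domRestrict] at *
    exact hB.matrix_conjTranspose.matrix_mulVec cg
  have huI : uIcc (0:ℝ) 1 = Icc 0 1 := uIcc_of_le zero_le_one
  have i1 : IntervalIntegrable (fun t => star (ζ t) ⬝ᵥ (derivWithin g (Icc 0 1) t - (B t)ᴴ *ᵥ g t))
      MeasureTheory.volume 0 1 :=
    ContinuousOn.intervalIntegrable (by rw [huI]; exact kop_cont cζ (cg'.sub cB2))
  have i2 : IntervalIntegrable (fun t => star (derivWithin ζ (Icc 0 1) t + B t *ᵥ ζ t) ⬝ᵥ g t)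
      MeasureTheory.volume 0 1 :=
    ContinuousOn.intervalIntegrable (by rw [huI]; exact kop_cont (cζ'.add cB1) cg)
  have key : ∫ t in (0:ℝ)..1, (star (ζ t) ⬝ᵥ (derivWithin g (Icc 0 1) t - (B t)ᴴ *ᵥ g t) +
      star (derivWithin ζ (Icc 0 1) t + B t *ᵥ ζ t) ⬝ᵥ g t) =
      star (ζ 1) ⬝ᵥ g 1 - star (ζ 0) ⬝ᵥ g 0 := by
    refine intervalIntegral.integral_eq_sub_of_hasDerivAt_of_le zero_le_one
      (f := fun t => star (ζ t) ⬝ᵥ g t) (kop_cont cζ cg) ?_ (i1.add i2)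
    intro t ht
    have hn : Icc (0:ℝ) 1 ∈ nhds t := Icc_mem_nhds ht.1 ht.2
    have dζ : HasDerivAt ζ (derivWithin ζ (Icc 0 1) t) t :=
      ((hζ.differentiableOn one_ne_zero t (Ioo_subset_Icc_self ht)).hasDerivWithinAt).hasDerivAt hn
    have dg : HasDerivAt g (derivWithin g (Icc 0 1) t) t :=
      ((hg.differentiableOn one_ne_zero t (Ioo_subset_Icc_self ht)).hasDerivWithinAt).hasDerivAt hn
    have e : star (ζ t) ⬝ᵥ (derivWithin g (Icc 0 1) t - (B t)ᴴ *ᵥ g t) +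
      star (derivWithin ζ (Icc 0 1) t + B t *ᵥ ζ t) ⬝ᵥ g t =
      ∑ i, (star (derivWithin ζ (Icc 0 1) t i) * g t i +
        star (ζ t i) * derivWithin g (Icc 0 1) t i) := by
      rw [dotProduct_sub, star_add, add_dotProduct, star_mulVec, dotProduct_mulVec,
        Finset.sum_add_distrib]
      simp only [dotProduct, Pi.star_apply]
      ring
    rw [e]
    unfold dotProduct
    refine HasDerivAt.fun_sum fun i _ => ?_
    exact ((hasDerivAt_pi.1 dζ i).star).mul (hasDerivAt_pi.1 dg i)
  rw [intervalIntegral.integral_add i1 i2] at key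
  rw [star_sub, sub_dotProduct, dotProduct_sub]
  linear_combination key

open scoped ComplexOrder in
lemma kop_key {n : ℕ} (B : ℝ → Matrix (Fin n) (Fin n) ℂ) (hB : ContinuousOn B (Icc 0 1))
    (ζ : ℝ → Fin n → ℂ) (hζ : ContDiffOn ℝ 1 ζ (Icc 0 1)) :
    ((∀ t ∈ Icc (0:ℝ) 1, derivWithin ζ (Icc 0 1) t + B t *ᵥ ζ t = 0) ∧ ζ 0 - ζ 1 = 0) ↔
      ∀ g : ℝ → Fin n → ℂ, ContDiffOn ℝ 1 g (Icc 0 1) →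
        (∫ t in (0:ℝ)..1, star (ζ t) ⬝ᵥ (derivWithin g (Icc 0 1) t - (B t)ᴴ *ᵥ g t)) +
          star (ζ 0) ⬝ᵥ (g 0 - g 1) = 0 := by
  constructor
  · rintro ⟨h1, h2⟩ g hg
    rw [kop_identity B hB ζ hζ g hg]
    have : ∫ t in (0:ℝ)..1, star (derivWithin ζ (Icc 0 1) t + B t *ᵥ ζ t) ⬝ᵥ g t
        = ∫ t in (0:ℝ)..1, (0:ℂ) := by
      refine intervalIntegral.integral_congr fun t ht => ?_
      rw [uIcc_of_le zero_le_one] at ht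
      simp [h1 t ht]
    rw [this, ← neg_sub (ζ 0), h2]
    simp
  · intro h
    have h' : ∀ g : ℝ → Fin n → ℂ, ContDiffOn ℝ 1 g (Icc 0 1) → star (ζ 1 - ζ 0) ⬝ᵥ g 1 -
      ∫ t in (0:ℝ)..1, star (derivWithin ζ (Icc 0 1) t + B t *ᵥ ζ t) ⬝ᵥ g t = 0 := by
      intro g hg
      rw [← kop_identity B hB ζ hζ g hg]
      exact h g hg
    have hD : ContinuousOn (fun t => derivWithin ζ (Icc 0 1) t + B t *ᵥ ζ t) (Icc 0 1) := by
      refine (hζ.continuousOn_derivWithin (uniqueDiffOn_Icc zero_lt_one) le_rfl).add ?_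
      have cζ := hζ.continuousOn
      rw [continuousOn_iff_continuous_domRestrict] at *
      exact hB.matrix_mulVec cζ
    have h1 : ∀ t ∈ Icc (0:ℝ) 1, derivWithin ζ (Icc 0 1) t + B t *ᵥ ζ t = 0 := by
      set D := fun t => derivWithin ζ (Icc 0 1) t + B t *ᵥ ζ t with hDdef
      have hDi : ∀ i, ContinuousOn (fun t => star (D t i)) (Icc 0 1) := fun i =>
        (continuousOn_pi.1 hD i).star
      have hae : ∀ i, ∀ᵐ t ∂(MeasureTheory.volume : MeasureTheory.Measure ℝ),
          t ∈ Ioo (0:ℝ) 1 → star (D t i) = 0 := by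
        intro i
        refine isOpen_Ioo.ae_eq_zero_of_integral_contDiff_smul_eq_zero ?_ ?_
        · exact (((hDi i).integrableOn_Icc).mono_set Ioo_subset_Icc_self).locallyIntegrableOn
        · intro f hf _ hsupp
          have hf0 : ∀ t, t ∉ Ioo (0:ℝ) 1 → f t = 0 := fun t ht =>
            image_eq_zero_of_notMem_tsupport fun h => ht (hsupp h)
          have hs := h' (fun t => Pi.single i ((f t : ℝ) : ℂ)) (by
            refine ContDiff.contDiffOn ?_
            rw [contDiff_pi]
            intro j
            by_cases hj : j = i
            · subst hj
              simp only [Pi.single_eq_same]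
              exact Complex.ofRealCLM.contDiff.comp (hf.of_le (by exact_mod_cast le_top))
            · simpa [Pi.single_apply, hj] using contDiff_const)
          simp only [hf0 1 (by simp), Complex.ofReal_zero, Pi.single_zero, dotProduct_zero,
            zero_sub, neg_eq_zero, dotProduct_single, Pi.star_apply] at hs
          rw [intervalIntegral.integral_of_le zero_le_one] at hs
          rw [← hs, ← MeasureTheory.setIntegral_eq_integral_of_forall_compl_eq_zero (s := Ioc 0 1)]
          · refine MeasureTheory.integral_congr_ae (Filter.Eventually.of_forall fun t => ?_)
            simp [D]
            ring
          · intro t ht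
            rw [hf0 t fun h => ht (Ioo_subset_Ioc_self h), zero_smul]
      intro t ht
      ext i
      have := MeasureTheory.Measure.eqOn_Icc_of_ae_eq MeasureTheory.volume (zero_ne_one)
        (f := fun t => star (D t i)) (g := fun _ => 0) (by
          rw [Filter.EventuallyEq, MeasureTheory.ae_restrict_iff' measurableSet_Icc,]
          have h0 : ∀ᵐ t ∂(MeasureTheory.volume : MeasureTheory.Measure ℝ), t ≠ 0 := by
            simp [MeasureTheory.ae_iff]
          have h1 : ∀ᵐ t ∂(MeasureTheory.volume : MeasureTheory.Measure ℝ), t ≠ 1 := by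
            simp [MeasureTheory.ae_iff]
          filter_upwards [hae i, h0, h1] with s hs h0 h1 hs'
          exact hs ⟨lt_of_le_of_ne hs'.1 h0.symm, lt_of_le_of_ne hs'.2 h1⟩)
        (hDi i) continuousOn_const ht
      simpa [D] using (star_eq_zero.1 this)
    refine ⟨h1, ?_⟩
    have h2 := h' (fun _ => ζ 1 - ζ 0) contDiffOn_const
    have : ∫ t in (0:ℝ)..1, star (derivWithin ζ (Icc 0 1) t + B t *ᵥ ζ t) ⬝ᵥ (ζ 1 - ζ 0)
        = ∫ t in (0:ℝ)..1, (0:ℂ) := by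
      refine intervalIntegral.integral_congr fun t ht => ?_
      rw [uIcc_of_le zero_le_one] at ht
      simp [h1 t ht]
    rw [this] at h2
    simp only [intervalIntegral.integral_zero, sub_zero] at h2
    rw [dotProduct_star_self_eq_zero] at h2
    rw [← neg_sub, h2, neg_zero]

/-- Proposition 3 of the paper: the complex differential–difference operators
`φ₁(ζ) = (ζ̇ − T·A(t)·ζ + iθ·ζ, ζ(0) − ζ(1))` and
`φ₂(ζ) = (ζ̇ + T·A(t)ᵀ·ζ + iθ·ζ, ζ(0) − ζ(1))` on `C¹([0,1],ℂⁿ)` satisfy: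
`ζ ∈ Ker φ₁` iff `(ζ, ζ(0))` is orthogonal (for the Hermitian inner product,
conjugate-linear in the first argument) to the range of `φ₂`, and `ζ ∈ Ker φ₂`
iff `(ζ, ζ(0))` is orthogonal to the range of `φ₁`. -/
theorem kernel_orthogonality_periodic_complex (n : ℕ) (T : ℝ) (hT : 0 < T) (θ : ℝ)
    (A : ℝ → Matrix (Fin n) (Fin n) ℝ) (hA : ContinuousOn A (Icc 0 1))
    (ζ : ℝ → Fin n → ℂ) (hζ : ContDiffOn ℝ 1 ζ (Icc 0 1)) :
    ((((∀ t ∈ Icc (0:ℝ) 1,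
          derivWithin ζ (Icc 0 1) t - (T : ℂ) • ((A t).map (fun r => (r : ℂ)) *ᵥ ζ t)
            + ((θ : ℂ) * Complex.I) • ζ t = 0) ∧
        ζ 0 - ζ 1 = 0) ↔
      ∀ g : ℝ → Fin n → ℂ, ContDiffOn ℝ 1 g (Icc 0 1) →
        (∫ t in (0:ℝ)..1,
            star (ζ t) ⬝ᵥ (derivWithin g (Icc 0 1) t
              + (T : ℂ) • ((A t)ᵀ.map (fun r => (r : ℂ)) *ᵥ g t)
              + ((θ : ℂ) * Complex.I) • g t)) +
          star (ζ 0) ⬝ᵥ (g 0 - g 1) = 0) ∧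
     (((∀ t ∈ Icc (0:ℝ) 1,
          derivWithin ζ (Icc 0 1) t + (T : ℂ) • ((A t)ᵀ.map (fun r => (r : ℂ)) *ᵥ ζ t)
            + ((θ : ℂ) * Complex.I) • ζ t = 0) ∧
        ζ 0 - ζ 1 = 0) ↔
      ∀ g : ℝ → Fin n → ℂ, ContDiffOn ℝ 1 g (Icc 0 1) →
        (∫ t in (0:ℝ)..1,
            star (ζ t) ⬝ᵥ (derivWithin g (Icc 0 1) t
              - (T : ℂ) • ((A t).map (fun r => (r : ℂ)) *ᵥ g t)
              + ((θ : ℂ) * Complex.I) • g t)) +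
          star (ζ 0) ⬝ᵥ (g 0 - g 1) = 0)) := by
  have cA : ContinuousOn (fun t => (A t).map (fun r => (r : ℂ))) (Icc 0 1) := by
    rw [continuousOn_iff_continuous_domRestrict] at *
    exact hA.matrix_map Complex.continuous_ofReal
  have cT : ContinuousOn (fun t => ((A t)ᵀ).map (fun r => (r : ℂ))) (Icc 0 1) := by
    rw [continuousOn_iff_continuous_domRestrict] at *
    exact hA.matrix_transpose.matrix_map Complex.continuous_ofReal
  have e1 : ∀ t, ((A t).map (fun r => (r : ℂ)))ᴴ = (A t)ᵀ.map (fun r => (r : ℂ)) := by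
    intro t; ext i j; simp
  have e2 : ∀ t, ((A t)ᵀ.map (fun r => (r : ℂ)))ᴴ = (A t).map (fun r => (r : ℂ)) := by
    intro t; ext i j; simp
  have k1 := kop_key (fun t => -((T:ℂ) • (A t).map (fun r => (r : ℂ))) +
    ((θ : ℂ) * Complex.I) • (1 : Matrix (Fin n) (Fin n) ℂ))
    ((cA.const_smul (T:ℂ)).neg.add continuousOn_const) ζ hζ
  have k2 := kop_key (fun t => ((T:ℂ) • (A t)ᵀ.map (fun r => (r : ℂ))) +
    ((θ : ℂ) * Complex.I) • (1 : Matrix (Fin n) (Fin n) ℂ))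
    ((cT.const_smul (T:ℂ)).add continuousOn_const) ζ hζ
  simp only [conjTranspose_add, conjTranspose_neg, conjTranspose_smul, e1, e2, conjTranspose_one,
    add_mulVec, neg_mulVec, smul_mulVec, one_mulVec, star_mul', Complex.star_def,
    Complex.conj_ofReal, Complex.conj_I, mul_neg, neg_smul, sub_eq_add_neg, neg_add, neg_neg,
    ← add_assoc] at k1 k2
  simp only [sub_eq_add_neg]
  exact ⟨k1, k2⟩
end

section
/- Let r : [0,T] → ℝⁿ be continuous and let v₁, v₂, φ*, v₁*, v₂* : [0,T] → ℝⁿ be continuously differentiable T-periodic functions (each takes the same value at 0 and at T) satisfying on [0,T]: v̇₁ − A(τ) v₁ = r, v̇₂ − A(τ) v₂ + v₁ = 0, φ̇* + A(τ)ᵀ φ* = 0, v̇₁* + A(τ)ᵀ v₁* − φ* = 0, and v̇₂* + A(τ)ᵀ v₂* + v₁* = 0. If ∫₀ᵀ ⟨φ*(τ), v₂(τ)⟩ dτ = 1, then ∫₀ᵀ ⟨v₁*(τ), v₁(τ)⟩ dτ = 1 and ∫₀ᵀ ⟨v₂*(τ), r(τ)⟩ dτ = 1. -/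
open Matrix Set

lemma dot_contOn {n : ℕ} {s : Set ℝ} {f g : ℝ → Fin n → ℝ} (hf : ContinuousOn f s)
    (hg : ContinuousOn g s) : ContinuousOn (fun τ => f τ ⬝ᵥ g τ) s := by
  simp only [dotProduct]
  exact continuousOn_finsetSum _ fun i _ =>
    ((continuous_apply i).comp_continuousOn hf).mul ((continuous_apply i).comp_continuousOn hg)

lemma adjoint_pairing (n : ℕ) (T : ℝ) (hT : 0 < T)
    (A : ℝ → Matrix (Fin n) (Fin n) ℝ) (w v p q : ℝ → Fin n → ℝ)
    (hw : ContDiffOn ℝ 1 w (Icc 0 T)) (hv : ContDiffOn ℝ 1 v (Icc 0 T))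
    (hp : ContinuousOn p (Icc 0 T)) (hq : ContinuousOn q (Icc 0 T))
    (hwp : w T = w 0) (hvp : v T = v 0)
    (hweq : ∀ τ ∈ Icc (0:ℝ) T, derivWithin w (Icc 0 T) τ = p τ - (A τ)ᵀ *ᵥ w τ)
    (hveq : ∀ τ ∈ Icc (0:ℝ) T, derivWithin v (Icc 0 T) τ = A τ *ᵥ v τ + q τ) :
    (∫ τ in (0:ℝ)..T, p τ ⬝ᵥ v τ) + (∫ τ in (0:ℝ)..T, w τ ⬝ᵥ q τ) = 0 := by
  have c1 := dot_contOn hp hv.continuousOn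
  have c2 := dot_contOn hw.continuousOn hq
  have i1 := c1.intervalIntegrable_of_Icc (μ := MeasureTheory.volume) hT.le
  have i2 := c2.intervalIntegrable_of_Icc (μ := MeasureTheory.volume) hT.le
  rw [← intervalIntegral.integral_add i1 i2]
  have key : ∀ f : ℝ → Fin n → ℝ, ContDiffOn ℝ 1 f (Icc 0 T) → ∀ x ∈ Ioo 0 T,
      HasDerivAt f (derivWithin f (Icc 0 T) x) x := fun f hf x hx =>
    ((hf.differentiableOn one_ne_zero) x (Ioo_subset_Icc_self hx)).hasDerivWithinAt.hasDerivAt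
      (Icc_mem_nhds hx.1 hx.2)
  rw [intervalIntegral.integral_eq_sub_of_hasDerivAt_of_le hT.le
    (f := fun τ => w τ ⬝ᵥ v τ) (dot_contOn hw.continuousOn hv.continuousOn) _ (i1.add i2)]
  · simp [hwp, hvp]
  · intro x hx
    have hx' := Ioo_subset_Icc_self hx
    have dw := hasDerivAt_pi.1 (key w hw x hx)
    have dv := hasDerivAt_pi.1 (key v hv x hx)
    have h : HasDerivAt (fun τ => w τ ⬝ᵥ v τ)
        (derivWithin w (Icc 0 T) x ⬝ᵥ v x + w x ⬝ᵥ derivWithin v (Icc 0 T) x) x := by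
      simp only [dotProduct, ← Finset.sum_add_distrib]
      exact HasDerivAt.fun_sum fun i _ => (dw i).mul (dv i)
    refine h.congr_deriv ?_
    rw [hweq x hx', hveq x hx', sub_dotProduct, dotProduct_add, mulVec_transpose,
      dotProduct_mulVec]
    ring

/-- At a 1:1 resonance of limit cycles: if `v̇₁ − A v₁ = r`, `v̇₂ − A v₂ + v₁ = 0`,
`φ̇* + Aᵀ φ* = 0`, `v̇₁* + Aᵀ v₁* − φ* = 0`, `v̇₂* + Aᵀ v₂* + v₁* = 0`, all
`T`-periodic, and `∫₀ᵀ ⟨φ*, v₂⟩ = 1`, then `∫₀ᵀ ⟨v₁*, v₁⟩ = 1` and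
`∫₀ᵀ ⟨v₂*, r⟩ = 1`. -/
theorem resonance11_normalizations (n : ℕ) (T : ℝ) (hT : 0 < T)
    (A : ℝ → Matrix (Fin n) (Fin n) ℝ) (hA : ContinuousOn A (Icc 0 T))
    (r : ℝ → Fin n → ℝ) (hr : ContinuousOn r (Icc 0 T))
    (v₁ v₂ φs v₁s v₂s : ℝ → Fin n → ℝ)
    (hv₁ : ContDiffOn ℝ 1 v₁ (Icc 0 T)) (hv₂ : ContDiffOn ℝ 1 v₂ (Icc 0 T))
    (hφs : ContDiffOn ℝ 1 φs (Icc 0 T)) (hv₁s : ContDiffOn ℝ 1 v₁s (Icc 0 T))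
    (hv₂s : ContDiffOn ℝ 1 v₂s (Icc 0 T))
    (hv₁per : v₁ T = v₁ 0) (hv₂per : v₂ T = v₂ 0) (hφper : φs T = φs 0)
    (hv₁sper : v₁s T = v₁s 0) (hv₂sper : v₂s T = v₂s 0)
    (hv₁eq : ∀ τ ∈ Icc (0:ℝ) T, derivWithin v₁ (Icc 0 T) τ - A τ *ᵥ v₁ τ = r τ)
    (hv₂eq : ∀ τ ∈ Icc (0:ℝ) T,
      derivWithin v₂ (Icc 0 T) τ - A τ *ᵥ v₂ τ + v₁ τ = 0)
    (hφeq : ∀ τ ∈ Icc (0:ℝ) T, derivWithin φs (Icc 0 T) τ + (A τ)ᵀ *ᵥ φs τ = 0)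
    (hv₁seq : ∀ τ ∈ Icc (0:ℝ) T,
      derivWithin v₁s (Icc 0 T) τ + (A τ)ᵀ *ᵥ v₁s τ - φs τ = 0)
    (hv₂seq : ∀ τ ∈ Icc (0:ℝ) T,
      derivWithin v₂s (Icc 0 T) τ + (A τ)ᵀ *ᵥ v₂s τ + v₁s τ = 0)
    (hnorm : (∫ τ in (0:ℝ)..T, φs τ ⬝ᵥ v₂ τ) = 1) :
    (∫ τ in (0:ℝ)..T, v₁s τ ⬝ᵥ v₁ τ) = 1 ∧
    (∫ τ in (0:ℝ)..T, v₂s τ ⬝ᵥ r τ) = 1 := by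
  have h1 := adjoint_pairing n T hT A v₁s v₂ φs (fun τ => -v₁ τ) hv₁s hv₂
    hφs.continuousOn hv₁.continuousOn.neg hv₁sper hv₂per
    (fun τ h => by rw [← sub_eq_zero, ← hv₁seq τ h]; abel)
    (fun τ h => by rw [← sub_eq_zero, ← hv₂eq τ h]; abel)
  have h2 := adjoint_pairing n T hT A v₂s v₁ (fun τ => -v₁s τ) r hv₂s hv₁
    hv₁s.continuousOn.neg hr hv₂sper hv₁per
    (fun τ h => by rw [← sub_eq_zero, ← hv₂seq τ h]; abel)
    (fun τ h => by rw [← hv₁eq τ h]; abel)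
  simp only [dotProduct_neg, neg_dotProduct, intervalIntegral.integral_neg] at h1 h2
  constructor <;> linarith
end

section
/- Let φ*, v : [0,T] → ℝⁿ be continuous functions and assume the vanishing of the fold normal form coefficient, i.e. ∫₀ᵀ ⟨φ*(τ), B(τ; v(τ), v(τ)) + 2 A(τ) v(τ)⟩ dτ = 0. For α ∈ ℝ and a continuous function h : [0,T] → ℝⁿ, define c(α, h) = (1/6) ∫₀ᵀ ⟨φ*(τ), −6α A(τ) v(τ) + 3 A(τ) h(τ) + 3 B(τ; v(τ), v(τ)) + 6 A(τ) v(τ) + 3 B(τ; h(τ), v(τ)) + C(τ; v(τ), v(τ), v(τ))⟩ dτ. Then for all α₁, α₂ ∈ ℝ and every continuous h, c(α₂, h − 2(α₂ − α₁) v) = c(α₁, h); i.e. the cusp-of-cycles normal form coefficient c is independent of the choice of the time-reparametrization coefficient α₁. -/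
open Matrix Set

/-- The cusp-of-cycles normal form coefficient
`c(α, h) = (1/6) ∫₀ᵀ ⟨φ*, −6α A v + 3 A h + 3 B(v,v) + 6 A v + 3 B(h,v) + C(v,v,v)⟩ dτ`. -/
noncomputable def cuspCoeff (n : ℕ) (T : ℝ)
    (A : ℝ → Matrix (Fin n) (Fin n) ℝ)
    (B : ℝ → (Fin n → ℝ) →ₗ[ℝ] (Fin n → ℝ) →ₗ[ℝ] (Fin n → ℝ))
    (C3 : ℝ → (Fin n → ℝ) →ₗ[ℝ] (Fin n → ℝ) →ₗ[ℝ] (Fin n → ℝ) →ₗ[ℝ] (Fin n → ℝ))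
    (φs v : ℝ → Fin n → ℝ) (α : ℝ) (h : ℝ → Fin n → ℝ) : ℝ :=
  (1/6) * ∫ τ in (0:ℝ)..T,
    φs τ ⬝ᵥ ((-(6*α)) • (A τ *ᵥ v τ) + (3:ℝ) • (A τ *ᵥ h τ)
      + (3:ℝ) • (B τ (v τ) (v τ)) + (6:ℝ) • (A τ *ᵥ v τ)
      + (3:ℝ) • (B τ (h τ) (v τ)) + C3 τ (v τ) (v τ) (v τ))

theorem lin_family_continuousOn {n : ℕ} {s : Set ℝ}
    (L : ℝ → (Fin n → ℝ) →ₗ[ℝ] (Fin n → ℝ))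
    (hL : ∀ x, ContinuousOn (fun τ => L τ x) s)
    (u : ℝ → Fin n → ℝ) (hu : ContinuousOn u s) :
    ContinuousOn (fun τ => L τ (u τ)) s := by
  have e : (fun τ => L τ (u τ))
      = fun τ => ∑ i, u τ i • L τ (Pi.single i (1:ℝ)) := by
    funext τ
    exact LinearMap.pi_apply_eq_sum_univ (L τ) (u τ) |>.trans (by
      refine Finset.sum_congr rfl fun i _ => ?_
      congr 2
      funext j
      simp [Pi.single_apply, eq_comm])
  rw [e]
  refine continuousOn_finsetSum _ fun i _ => ?_
  exact (continuousOn_pi.1 hu i).smul (hL _)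

/-- At a cusp-of-cycles point (where the fold coefficient
`b = (1/2)∫₀ᵀ ⟨φ*, B(v,v) + 2 A v⟩ dτ` vanishes), the cusp normal form
coefficient `c` does not depend on the choice of the time-reparametrization
coefficient `α₁`: replacing `(α₁, h)` by `(α₂, h − 2(α₂ − α₁) v)` yields the
same value of `c`. -/
theorem cusp_coefficient_independent_of_alpha (n : ℕ) (T : ℝ) (hT : 0 < T)
    (A : ℝ → Matrix (Fin n) (Fin n) ℝ) (hA : ContinuousOn A (Icc 0 T))
    (B : ℝ → (Fin n → ℝ) →ₗ[ℝ] (Fin n → ℝ) →ₗ[ℝ] (Fin n → ℝ))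
    (hB : ∀ x y, ContinuousOn (fun τ => B τ x y) (Icc 0 T))
    (hBsymm : ∀ τ x y, B τ x y = B τ y x)
    (C3 : ℝ → (Fin n → ℝ) →ₗ[ℝ] (Fin n → ℝ) →ₗ[ℝ] (Fin n → ℝ) →ₗ[ℝ] (Fin n → ℝ))
    (hC : ∀ x y z, ContinuousOn (fun τ => C3 τ x y z) (Icc 0 T))
    (hCsymm : ∀ τ x y z, C3 τ x y z = C3 τ y x z ∧ C3 τ x y z = C3 τ x z y)
    (φs v : ℝ → Fin n → ℝ)
    (hφs : ContinuousOn φs (Icc 0 T)) (hv : ContinuousOn v (Icc 0 T))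
    (hfold : (∫ τ in (0:ℝ)..T,
      φs τ ⬝ᵥ (B τ (v τ) (v τ) + (2:ℝ) • (A τ *ᵥ v τ))) = 0) :
    ∀ (α₁ α₂ : ℝ) (h : ℝ → Fin n → ℝ), ContinuousOn h (Icc 0 T) →
      cuspCoeff n T A B C3 φs v α₂ (fun τ => h τ - (2*(α₂ - α₁)) • v τ)
        = cuspCoeff n T A B C3 φs v α₁ h := by
  intro α₁ α₂ h hh
  have hBc : ∀ u w : ℝ → Fin n → ℝ, ContinuousOn u (Icc 0 T) → ContinuousOn w (Icc 0 T) →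
      ContinuousOn (fun τ => B τ (u τ) (w τ)) (Icc 0 T) := fun u w hu hw =>
    lin_family_continuousOn (fun τ => (B τ).flip (w τ))
      (fun x => lin_family_continuousOn (fun τ => B τ x) (hB x) w hw) u hu
  have hCc : ContinuousOn (fun τ => C3 τ (v τ) (v τ) (v τ)) (Icc 0 T) :=
    lin_family_continuousOn (fun τ => ((C3 τ).flip (v τ)).flip (v τ))
      (fun x => lin_family_continuousOn (fun τ => (C3 τ x).flip (v τ))
        (fun y => lin_family_continuousOn (fun τ => C3 τ x y) (hC x y) v hv) v hv) v hv
  have hAc : ∀ u : ℝ → Fin n → ℝ, ContinuousOn u (Icc 0 T) →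
      ContinuousOn (fun τ => A τ *ᵥ u τ) (Icc 0 T) := fun u hu => by
    rw [continuousOn_iff_continuous_restrict] at *
    exact Continuous.matrix_mulVec hA hu
  have hdot : ∀ u : ℝ → Fin n → ℝ, ContinuousOn u (Icc 0 T) →
      IntervalIntegrable (fun τ => φs τ ⬝ᵥ u τ) MeasureTheory.volume 0 T := fun u hu => by
    apply ContinuousOn.intervalIntegrable
    rw [uIcc_of_le hT.le]
    rw [continuousOn_iff_continuous_restrict] at *
    exact Continuous.dotProduct hφs hu
  have i1 := hdot _ (((((((hAc v hv).const_smul (-(6*α₁))).add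
    ((hAc h hh).const_smul (3:ℝ))).add ((hBc v v hv hv).const_smul (3:ℝ))).add
    ((hAc v hv).const_smul (6:ℝ))).add ((hBc h v hh hv).const_smul (3:ℝ))).add hCc)
  have i2 := (hdot _ ((hBc v v hv hv).add ((hAc v hv).const_smul (2:ℝ)))).const_mul
    (-(6*(α₂-α₁)))
  have key := intervalIntegral.integral_add i1 i2
  rw [intervalIntegral.integral_const_mul] at key
  simp only [Pi.add_apply, Pi.smul_apply] at key
  rw [hfold, mul_zero, add_zero] at key
  unfold cuspCoeff
  rw [← key]
  congr 2
  funext τ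
  simp only [Matrix.mulVec_sub, Matrix.mulVec_smul, map_sub, map_smul, LinearMap.sub_apply,
    LinearMap.smul_apply, dotProduct_add, dotProduct_smul, dotProduct_sub, smul_eq_mul]
  ring
end
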